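/- Let E₁, E₂ be nontrivial word equations on n unknowns such that the set of solutions of E₁ of rank n − 1 is different from the set of solutions of E₂ of rank n − 1. Then there exist unknowns x_k, x_l ∈ Ξ and a family of at most (|E₁|_{x_k} + |E₁|_{x_l})² ℚ-linear subspaces of ℚ^n, each of dimension at most n − 1, whose union contains the length type (regarded as a vector in ℚ^n) of every common solution of E₁ and E₂ of rank n − 1. -/

import Mathlib

open Polynomial

/-- The characteristic polynomial `P(w)` of a word. -/
noncomputable def wordPoly (w : List ℕ) : Polynomial ℤ :=
  ∑ i ∈ Finset.range w.length, Polynomial.C (w.getD i 0 : ℤ) * Polynomial.X ^ i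

/-- Application of a morphism (given by the images of the unknowns) to a word. -/
def mApply {n : ℕ} {β : Type*} (h : Fin n → List β) (w : List (Fin n)) : List β :=
  (w.map h).flatten

/-- The morphism maps every unknown to a word over the alphabet `A`. -/
def IntoAlph {n : ℕ} (A : Finset ℕ) (h : Fin n → List ℕ) : Prop :=
  ∀ i, ∀ a ∈ h i, a ∈ A

/-- `w` is a product of words from `A`. -/
def InStar (A : Finset (List ℕ)) (w : List ℕ) : Prop :=
  ∃ l : List (List ℕ), (∀ u ∈ l, u ∈ A) ∧ l.flatten = w

/-- The combinatorial rank of a morphism: the smallest `r` such that there is a set of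
`r` words whose products contain all images of the unknowns. -/
noncomputable def mRank {n : ℕ} (h : Fin n → List ℕ) : ℕ :=
  sInf {r | ∃ A : Finset (List ℕ), A.card = r ∧ ∀ i, InStar A (h i)}

/-- The length type of a morphism, as a rational vector. -/
def lenQ {n : ℕ} (h : Fin n → List ℕ) : Fin n → ℚ :=
  fun i => ((h i).length : ℚ)

/-- `|w|_L`: the length of the image of `w` under any morphism of length type `L`. -/
def lenL {n : ℕ} (L : Fin n → ℕ) (w : List (Fin n)) : ℕ :=
  (w.map L).sum

/-- The polynomial `Q_{E,x,L}` for the word equation `u = v`, the unknown `x` and the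
length type `L`. -/
noncomputable def eqPoly {n : ℕ} (u v : List (Fin n)) (x : Fin n) (L : Fin n → ℕ) :
    Polynomial ℤ :=
  (∑ i ∈ Finset.range u.length,
      if u.getD i x = x then (Polynomial.X : Polynomial ℤ) ^ lenL L (u.take i) else 0)
    - ∑ i ∈ Finset.range v.length,
      if v.getD i x = x then (Polynomial.X : Polynomial ℤ) ^ lenL L (v.take i) else 0

/-- Embedding of `ℤ[X]` into the field `ℚ(X)` of rational functions. -/
noncomputable def toRF (p : Polynomial ℤ) : RatFunc ℚ :=
  algebraMap (Polynomial ℚ) (RatFunc ℚ) (p.map (Int.castRingHom ℚ))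

/-!
Specialise the Fox derivatives of words at `x ↦ X ^ |h(x)|`. The chain rule turns the condition
that `h` solves `u = v` into a linear one on the vector of polynomials `Q_{E,x,L}` attached to the
equation and to the length type `L` of `h`. Nielsen reduction shows that the module generated by
these vectors, over all equations solved by a morphism of rank at least `n - 1`, has rank at most
one. So at every common solution of `E₁` and `E₂` of that rank the `2 × 2` minors of the two
vectors vanish, whereas some minor survives at a morphism solving only one of the equations.

Such a minor is a difference of two sums of monomials `X ^ (L ⬝ᵥ m)`, where the exponent vectors `m`
on either side do not depend on `L` and form `|E₁|_{x_k} + |E₁|_{x_l}` chains. Cancel the exponent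
vectors common to both sides. If the minor vanishes at `L`, the least surviving weights on the two
sides are equal; they are attained at the least surviving elements of two chains, so `L` lies in one
of the hyperplanes given by pairs of such elements.
-/

/-! ### Fox derivatives of words -/

section FoxDerivative

variable {α β : Type*} [DecidableEq α] [DecidableEq β]

/-- The Fox derivatives `∂w/∂x` of a word, specialised at `y ↦ X ^ L y`: the coordinate at `x` sums
`X ^ |p|_L` over the prefixes `p` of `w` that are followed by the letter `x`. -/
noncomputable def foxDeriv (L : α → ℕ) : List α → α → ℤ[X]
  | [] => 0
  | y :: w => Pi.single y 1 + (X : ℤ[X]) ^ L y • foxDeriv L w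

theorem foxDeriv_append (L : α → ℕ) (u v : List α) :
    foxDeriv L (u ++ v) = foxDeriv L u + (X : ℤ[X]) ^ (u.map L).sum • foxDeriv L v := by
  induction u with
  | nil => simp [foxDeriv]
  | cons y u ih => simp [foxDeriv, ih, smul_smul, pow_add, add_assoc]

theorem coeff_zero_foxDeriv_cons (L : α → ℕ) (y : α) (w : List α) (x : α) :
    (foxDeriv L (y :: w) x).coeff 0 =
      (if x = y then 1 else 0) + if L y = 0 then (foxDeriv L w x).coeff 0 else 0 := by
  rw [foxDeriv, Pi.add_apply, Pi.smul_apply, smul_eq_mul, coeff_add, coeff_X_pow_mul',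
    Pi.single_apply]
  split_ifs <;> simp_all

theorem coeff_zero_foxDeriv_nonneg (L : α → ℕ) (w : List α) (x : α) :
    0 ≤ (foxDeriv L w x).coeff 0 := by
  induction w with
  | nil => simp [foxDeriv]
  | cons y w ih =>
    rw [coeff_zero_foxDeriv_cons]
    split_ifs <;> positivity

theorem coeff_zero_foxDeriv_cons_self_pos (L : α → ℕ) (w : List α) (x : α) :
    0 < (foxDeriv L (x :: w) x).coeff 0 := by
  have tail_nonneg := coeff_zero_foxDeriv_nonneg L w x
  rw [coeff_zero_foxDeriv_cons, if_pos rfl]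
  split_ifs <;> positivity

theorem head_eq_of_foxDeriv_cons_eq {L : α → ℕ} {x y : α} {u v : List α}
    (h : foxDeriv L (x :: u) = foxDeriv L (y :: v)) (hy : L y ≠ 0) : x = y := by
  by_contra hxy
  have head_pos := coeff_zero_foxDeriv_cons_self_pos L u x
  rw [h, coeff_zero_foxDeriv_cons, if_neg hxy, if_neg hy] at head_pos
  exact lt_irrefl _ head_pos

theorem foxDeriv_injective {L : α → ℕ} (hL : ∀ x y, L x = 0 → L y = 0 → x = y) :
    Function.Injective (foxDeriv L) := by
  have cons_ne_nil (x : α) (w : List α) : foxDeriv L (x :: w) ≠ foxDeriv L [] := fun h => by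
    have head_pos := coeff_zero_foxDeriv_cons_self_pos L w x
    rw [h] at head_pos
    exact lt_irrefl _ head_pos
  intro u
  induction u with
  | nil =>
    rintro (_ | ⟨y, v⟩) h
    · rfl
    · exact absurd h.symm (cons_ne_nil y v)
  | cons x u ih =>
    rintro (_ | ⟨y, v⟩) h
    · exact absurd h (cons_ne_nil x u)
    · have hxy : x = y := by
        by_cases hy : L y = 0
        · by_cases hx : L x = 0
          · exact hL x y hx hy
          · exact (head_eq_of_foxDeriv_cons_eq h.symm hx).symm
        · exact head_eq_of_foxDeriv_cons_eq h hy
      subst hxy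
      have tails : (X : ℤ[X]) ^ L x • foxDeriv L u = (X : ℤ[X]) ^ L x • foxDeriv L v :=
        add_left_cancel h
      rw [ih (smul_right_injective _ (pow_ne_zero _ X_ne_zero) tails)]

theorem foxDeriv_filter (L : α → ℕ) (w : List α) {x : α} (hx : L x ≠ 0) :
    foxDeriv L (w.filter (L · ≠ 0)) x = foxDeriv L w x := by
  induction w with
  | nil => rfl
  | cons y w ih =>
    by_cases hy : L y = 0
    · have hxy : x ≠ y := fun h => hx (h ▸ hy)
      simpa [hy, foxDeriv, hxy] using ih
    · simpa [hy, foxDeriv] using ih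

variable [Fintype α]

/-- The Jacobian of the substitution `σ`, whose row at `x` is the Fox derivative of `σ x`, acting on
row vectors. -/
noncomputable def foxJacobian (L : β → ℕ) (σ : α → List β) : (α → ℤ[X]) →ₗ[ℤ[X]] (β → ℤ[X]) :=
  Fintype.linearCombination ℤ[X] fun x => foxDeriv L (σ x)

theorem foxDeriv_flatMap (L : β → ℕ) (σ : α → List β) (w : List α) :
    foxDeriv L (w.flatMap σ) =
      foxJacobian L σ (foxDeriv (fun x => ((σ x).map L).sum) w) := by
  induction w with
  | nil => simp [foxDeriv]
  | cons y w ih =>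
    rw [List.flatMap_cons, foxDeriv_append, ih, foxDeriv, map_add, map_smul, foxJacobian,
      Fintype.linearCombination_apply_single, one_smul]

theorem flatMap_eq_flatMap_iff_foxJacobian (h : α → List β) (u v : List α) :
    u.flatMap h = v.flatMap h ↔
      foxJacobian 1 h (foxDeriv (List.length ∘ h) u - foxDeriv (List.length ∘ h) v) = 0 := by
  have chain_rule (w : List α) :
      foxDeriv 1 (w.flatMap h) = foxJacobian 1 h (foxDeriv (List.length ∘ h) w) := by
    simp [foxDeriv_flatMap, Function.comp_def, Pi.one_def]
  rw [map_sub, sub_eq_zero, ← chain_rule, ← chain_rule,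
    (foxDeriv_injective (L := 1) fun _ _ hx => absurd hx one_ne_zero).eq_iff]

theorem foxJacobian_update_pair {L : α → ℕ} (a b : α) (q : α → ℤ[X]) :
    foxJacobian L (Function.update (fun x => [x]) b [a, b]) q =
      q + q b • (Pi.single a 1 + ((X : ℤ[X]) ^ L a - 1) • Pi.single b 1) := by
  have row (x : α) : foxDeriv L (Function.update (fun x => [x]) b [a, b] x) = Pi.single x 1 +
      if x = b then Pi.single a 1 + ((X : ℤ[X]) ^ L a - 1) • Pi.single b 1 else 0 := by
    rcases eq_or_ne x b with rfl | hxb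
    · simp only [Function.update_self, foxDeriv, if_true]
      module
    · simp [hxb, foxDeriv]
  have sum_single : ∑ x, q x • (Pi.single x 1 : α → ℤ[X]) = q := by
    simp [← Pi.single_smul, Finset.univ_sum_single]
  simp [foxJacobian, Fintype.linearCombination_apply, row, smul_add, Finset.sum_add_distrib,
    sum_single]

theorem foxJacobian_update_pair_injective {L : α → ℕ} {a b : α} (hab : a ≠ b) :
    Function.Injective (foxJacobian L (Function.update (fun x => [x]) b [a, b])) := by
  rw [injective_iff_map_eq_zero]
  intro q hq
  rw [foxJacobian_update_pair] at hq
  have hqb : q b = 0 := by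
    have coord_b := congrFun hq b
    simp only [Pi.add_apply, Pi.smul_apply, Pi.single_eq_same, Pi.single_eq_of_ne hab.symm,
      smul_eq_mul, Pi.zero_apply] at coord_b
    have mul_X_pow : q b * X ^ L a = 0 := by linear_combination coord_b
    exact (mul_eq_zero.mp mul_X_pow).resolve_right (pow_ne_zero _ X_ne_zero)
  simpa [hqb] using hq

end FoxDerivative

theorem eqPoly_eq_foxDeriv_sub {n : ℕ} (u v : List (Fin n)) (x : Fin n) (L : Fin n → ℕ) :
    eqPoly u v x L = foxDeriv L u x - foxDeriv L v x := by
  have sum_prefixes (w : List (Fin n)) :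
      ∑ i ∈ Finset.range w.length, (if w.getD i x = x then (X : ℤ[X]) ^ lenL L (w.take i) else 0) =
        foxDeriv L w x := by
    induction w with
    | nil => rfl
    | cons y w ih =>
      rw [List.length_cons, Finset.sum_range_succ', foxDeriv, Pi.add_apply, Pi.smul_apply, ← ih,
        smul_eq_mul, Finset.mul_sum]
      simp [lenL, pow_add, Pi.single_apply, eq_comm, add_comm]
  rw [eqPoly, sum_prefixes, sum_prefixes]

/-! ### The relation module of a morphism -/

section RelationModule

variable {α β γ : Type*} [DecidableEq α] [DecidableEq β]

/-- The module generated by the differences of the Fox derivatives of the two sides of the word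
equations solved by `h`. -/
noncomputable def relationModule (h : α → List γ) : Submodule ℤ[X] (α → ℤ[X]) :=
  Submodule.span ℤ[X] {q | ∃ u v : List α, u.flatMap h = v.flatMap h ∧
    q = foxDeriv (List.length ∘ h) u - foxDeriv (List.length ∘ h) v}

theorem foxDeriv_sub_mem_relationModule {h : α → List γ} {u v : List α}
    (huv : u.flatMap h = v.flatMap h) :
    foxDeriv (List.length ∘ h) u - foxDeriv (List.length ∘ h) v ∈ relationModule h :=
  Submodule.subset_span ⟨u, v, huv, rfl⟩

theorem foxJacobian_mem_relationModule [Fintype α] {g : β → List γ} {σ : α → List β}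
    {q : α → ℤ[X]} (hq : q ∈ relationModule fun x => (σ x).flatMap g) :
    foxJacobian (List.length ∘ g) σ q ∈ relationModule g := by
  suffices h_le : relationModule (fun x => (σ x).flatMap g) ≤
      (relationModule g).comap (foxJacobian (List.length ∘ g) σ) from h_le hq
  rw [relationModule, Submodule.span_le]
  rintro _ ⟨u, v, huv, rfl⟩
  have length_comp : List.length ∘ (fun x => (σ x).flatMap g) =
      fun x => ((σ x).map (List.length ∘ g)).sum := by
    ext x
    simp [List.length_flatMap, Function.comp_def]
  rw [length_comp, SetLike.mem_coe, Submodule.mem_comap, map_sub, ← foxDeriv_flatMap,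
    ← foxDeriv_flatMap]
  exact foxDeriv_sub_mem_relationModule (by simpa only [List.flatMap_assoc] using huv)

theorem finrank_relationModule_le_of_injective [Fintype α] [Finite β] {g : β → List γ}
    {σ : α → List β}
    (hσ : Function.Injective (foxJacobian (List.length ∘ g) σ)) :
    Module.finrank ℤ[X] (relationModule fun x => (σ x).flatMap g) ≤
      Module.finrank ℤ[X] (relationModule g) :=
  LinearMap.finrank_le_finrank_of_injective
    (f := (foxJacobian (List.length ∘ g) σ).restrict fun _ => foxJacobian_mem_relationModule)
    fun _ _ hpq => Subtype.ext (hσ (congrArg Subtype.val hpq))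

/-- The nonempty images of letters under `h` form a prefix code, and letters with the same nonempty
image are equal. -/
def IsPrefixFree (h : α → List γ) : Prop :=
  ∀ a b, h a ≠ [] → h a <+: h b → a = b

omit [DecidableEq α] in
theorem IsPrefixFree.eq_of_flatMap_eq {h : α → List γ} (hpre : IsPrefixFree h) :
    ∀ {u v : List α}, (∀ x ∈ u, h x ≠ []) → (∀ x ∈ v, h x ≠ []) →
      u.flatMap h = v.flatMap h → u = v
  | [], [], _, _, _ => rfl
  | [], b :: v, _, hv, huv => absurd (List.append_eq_nil_iff.mp huv.symm).1 (hv b (by simp))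
  | a :: u, [], hu, _, huv => absurd (List.append_eq_nil_iff.mp huv).1 (hu a (by simp))
  | a :: u, b :: v, hu, hv, huv => by
    rw [List.forall_mem_cons] at hu hv
    rw [List.flatMap_cons, List.flatMap_cons] at huv
    have hab : a = b := by
      rcases List.prefix_or_prefix_of_prefix (List.prefix_append (h a) _)
          (huv ▸ List.prefix_append (h b) _) with hp | hp
      · exact hpre a b hu.1 hp
      · exact (hpre b a hv.1 hp).symm
    subst hab
    rw [hpre.eq_of_flatMap_eq hu.2 hv.2 (List.append_cancel_left huv)]

theorem IsPrefixFree.apply_eq_zero_of_mem_relationModule {h : α → List γ} (hpre : IsPrefixFree h)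
    {q : α → ℤ[X]} (hq : q ∈ relationModule h) {x : α} (hx : h x ≠ []) : q x = 0 := by
  suffices h_le : relationModule h ≤ LinearMap.ker (LinearMap.proj x) from h_le hq
  rw [relationModule, Submodule.span_le]
  rintro _ ⟨u, v, huv, rfl⟩
  let L := List.length ∘ h
  have flatMap_filter (w : List α) : (w.filter (L · ≠ 0)).flatMap h = w.flatMap h := by
    induction w with
    | nil => rfl
    | cons y w ih =>
      by_cases hy : h y = []
      · simpa [hy, L] using ih
      · simpa [hy, L] using ih
  have filter_eq : u.filter (L · ≠ 0) = v.filter (L · ≠ 0) :=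
    hpre.eq_of_flatMap_eq (by simp [L]) (by simp [L]) (by rw [flatMap_filter, flatMap_filter, huv])
  have hLx : L x ≠ 0 := by simpa [L] using hx
  change foxDeriv L u x - foxDeriv L v x = 0
  rw [← foxDeriv_filter L u hLx, ← foxDeriv_filter L v hLx, filter_eq, sub_self]

theorem IsPrefixFree.finrank_relationModule_le [Finite α] {h : α → List γ} (hpre : IsPrefixFree h) :
    Module.finrank ℤ[X] (relationModule h) ≤ {x | h x = []}.ncard := by
  have := Fintype.ofFinite {x | h x = []}
  rw [← Nat.card_coe_set_eq, Nat.card_eq_fintype_card, ← Module.finrank_fintype_fun_eq_card ℤ[X]]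
  refine LinearMap.finrank_le_finrank_of_injective
    (f := LinearMap.funLeft ℤ[X] ℤ[X] (Subtype.val : {x | h x = []} → α) ∘ₗ
      (relationModule h).subtype) ?_
  rw [injective_iff_map_eq_zero]
  rintro ⟨q, hq⟩ hq_zero
  ext1
  funext x
  by_cases hx : h x = []
  · exact congrFun hq_zero ⟨x, hx⟩
  · exact hpre.apply_eq_zero_of_mem_relationModule hq hx

end RelationModule

/-! ### Combinatorial rank and the rank of the relation module -/

theorem InStar.flatMap {ι : Type*} {A : Finset (List ℕ)} {g : ι → List ℕ}
    (hg : ∀ y, InStar A (g y)) (w : List ι) : InStar A (w.flatMap g) := by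
  choose factors factors_mem flatten_factors using hg
  refine ⟨w.flatMap factors, fun a ha => ?_, ?_⟩
  · obtain ⟨y, -, hy⟩ := List.mem_flatMap.mp ha
    exact factors_mem y a hy
  · induction w with
    | nil => rfl
    | cons y w ih => rw [List.flatMap_cons, List.flatten_append, flatten_factors, ih,
        List.flatMap_cons]

theorem exists_card_eq_mRank {n : ℕ} (h : Fin n → List ℕ) :
    ∃ A : Finset (List ℕ), A.card = mRank h ∧ ∀ i, InStar A (h i) :=
  Nat.sInf_mem (s := {r | ∃ A : Finset (List ℕ), A.card = r ∧ ∀ i, InStar A (h i)})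
    ⟨_, Finset.univ.image h, rfl, fun i => ⟨[h i], by simp, by simp⟩⟩

theorem mRank_le_card {n : ℕ} {h : Fin n → List ℕ} {A : Finset (List ℕ)}
    (hA : ∀ i, InStar A (h i)) : mRank h ≤ A.card :=
  Nat.sInf_le ⟨A, rfl, hA⟩

theorem mRank_flatMap_le {m n : ℕ} (g : Fin m → List ℕ) (σ : Fin n → List (Fin m)) :
    mRank (fun x => (σ x).flatMap g) ≤ mRank g := by
  obtain ⟨A, hA, hg⟩ := exists_card_eq_mRank g
  exact (mRank_le_card fun x => InStar.flatMap hg (σ x)).trans_eq hA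

theorem ncard_eq_nil_add_mRank_le {n : ℕ} (h : Fin n → List ℕ) :
    {x | h x = []}.ncard + mRank h ≤ n := by
  have rank_le : mRank h ≤ {x | h x = []}ᶜ.ncard := by
    classical
    rw [Set.ncard_eq_toFinset_card']
    refine (mRank_le_card (A := Finset.image h (Set.toFinset {x | h x = []}ᶜ)) fun x => ?_).trans
      Finset.card_image_le
    by_cases hx : h x = []
    · exact ⟨[], by simp, hx.symm⟩
    · exact ⟨[h x], by simpa using ⟨x, hx, rfl⟩, by simp⟩
  calc {x | h x = []}.ncard + mRank h ≤ {x | h x = []}.ncard + {x | h x = []}ᶜ.ncard := by gcongr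
    _ = n := by rw [Set.ncard_add_ncard_compl, Nat.card_fin]

theorem eq_of_eq_nil_of_le_mRank_add_one {n : ℕ} {h : Fin n → List ℕ} (hrank : n ≤ mRank h + 1)
    {x y : Fin n} (hx : h x = []) (hy : h y = []) : x = y := by
  have ncard_le_one : {x | h x = []}.ncard ≤ 1 := by
    have nullity_bound := ncard_eq_nil_add_mRank_le h
    lia
  exact (Set.ncard_le_one (Set.toFinite _)).mp ncard_le_one x hx y hy

/-- Nielsen reduction: if `h b = h a ++ t`, replacing `h b` by `t` shortens `h`, does not decrease
its rank, and does not decrease the rank of its relation module. -/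
theorem finrank_relationModule_add_mRank_le {n : ℕ} (h : Fin n → List ℕ) :
    Module.finrank ℤ[X] (relationModule h) + mRank h ≤ n := by
  induction hN : ∑ i, (h i).length using Nat.strong_induction_on generalizing h with
  | _ N ih =>
  by_cases hpre : IsPrefixFree h
  · exact (Nat.add_le_add_right hpre.finrank_relationModule_le _).trans
      (ncard_eq_nil_add_mRank_le h)
  · simp only [IsPrefixFree, not_forall] at hpre
    obtain ⟨a, b, ha, ⟨t, ht⟩, hab⟩ := hpre
    let g := Function.update h b t
    let σ : Fin n → List (Fin n) := Function.update (fun x => [x]) b [a, b]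
    have h_eq : h = fun x => (σ x).flatMap g := by
      funext x
      rcases eq_or_ne x b with rfl | hxb
      · simp [σ, g, hab, ht]
      · simp [σ, g, hxb]
    have length_lt : ∑ i, (g i).length < N := by
      rw [← hN]
      refine Finset.sum_lt_sum (fun i _ => ?_) ⟨b, Finset.mem_univ b, ?_⟩
      · rcases eq_or_ne i b with rfl | hib
        · simp [g, ← ht]
        · simp [g, hib]
      · simpa [g, ← ht, List.length_pos_iff] using ha
    calc Module.finrank ℤ[X] (relationModule h) + mRank h
        ≤ Module.finrank ℤ[X] (relationModule g) + mRank g := by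
          rw [h_eq]
          exact Nat.add_le_add
            (finrank_relationModule_le_of_injective (foxJacobian_update_pair_injective hab))
            (mRank_flatMap_le g σ)
      _ ≤ n := ih _ length_lt g rfl

theorem mul_apply_comm_of_finrank_le_one {R ι : Type*} [CommRing R] [IsDomain R]
    {V : Submodule R (ι → R)} [Module.Finite R V] (hV : Module.finrank R V ≤ 1)
    {p q : ι → R} (hp : p ∈ V) (hq : q ∈ V) (k l : ι) : p k * q l = p l * q k := by
  have dependent : ¬ LinearIndependent R ![(⟨p, hp⟩ : V), ⟨q, hq⟩] := fun hind => by
    have two_le_finrank := hind.fintype_card_le_finrank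
    rw [Fintype.card_fin] at two_le_finrank
    lia
  simp only [LinearIndependent.pair_iff, not_forall, not_and_or] at dependent
  obtain ⟨s, t, hst, hne⟩ := dependent
  have relation (i : ι) : s * p i + t * q i = 0 := congrFun (congrArg Subtype.val hst) i
  rcases hne with hs | ht
  · refine mul_left_cancel₀ hs ?_
    linear_combination q l * relation k - q k * relation l
  · refine mul_left_cancel₀ ht ?_
    linear_combination p k * relation l - p l * relation k

/-! ### Minors of a pair of equations -/

/-- The minor, in the columns of the unknowns `k` and `l`, of the matrix with the two rows
`Q_{E₁,x,L}` and `Q_{E₂,x,L}`. -/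
noncomputable def eqMinor {n : ℕ} (L : Fin n → ℕ) (e₁ e₂ : List (Fin n) × List (Fin n))
    (k l : Fin n) : ℤ[X] :=
  eqPoly e₁.1 e₁.2 k L * eqPoly e₂.1 e₂.2 l L - eqPoly e₁.1 e₁.2 l L * eqPoly e₂.1 e₂.2 k L

theorem eqMinor_swap {n : ℕ} (L : Fin n → ℕ) (e₁ e₂ : List (Fin n) × List (Fin n)) (k l : Fin n) :
    eqMinor L e₂ e₁ k l = -eqMinor L e₁ e₂ k l := by
  simp only [eqMinor]
  ring

section Minors

variable {n : ℕ} {h : Fin n → List ℕ} {e₁ e₂ : List (Fin n) × List (Fin n)}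

theorem eqMinor_eq_zero_of_solves (hrank : n ≤ mRank h + 1)
    (he₁ : mApply h e₁.1 = mApply h e₁.2) (he₂ : mApply h e₂.1 = mApply h e₂.2) (k l : Fin n) :
    eqMinor (List.length ∘ h) e₁ e₂ k l = 0 := by
  have finrank_le : Module.finrank ℤ[X] (relationModule h) ≤ 1 := by
    have rank_bound := finrank_relationModule_add_mRank_le h
    lia
  simpa only [eqMinor, eqPoly_eq_foxDeriv_sub, Pi.sub_apply] using sub_eq_zero.mpr <|
    mul_apply_comm_of_finrank_le_one finrank_le (foxDeriv_sub_mem_relationModule he₁)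
      (foxDeriv_sub_mem_relationModule he₂) k l

theorem exists_eqPoly_ne_zero (hrank : n ≤ mRank h + 1) {u v : List (Fin n)} (hne : u ≠ v) :
    ∃ x, eqPoly u v x (List.length ∘ h) ≠ 0 := by
  by_contra! hzero
  refine hne (foxDeriv_injective (L := List.length ∘ h) (fun x y hx hy => ?_) ?_)
  · exact eq_of_eq_nil_of_le_mRank_add_one hrank (List.length_eq_zero_iff.mp hx)
      (List.length_eq_zero_iff.mp hy)
  · funext x
    rw [← sub_eq_zero, ← eqPoly_eq_foxDeriv_sub, hzero x]

theorem mApply_eq_iff_foxJacobian (e : List (Fin n) × List (Fin n)) :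
    mApply h e.1 = mApply h e.2 ↔
      foxJacobian 1 h (fun x => eqPoly e.1 e.2 x (List.length ∘ h)) = 0 := by
  simp only [eqPoly_eq_foxDeriv_sub]
  exact flatMap_eq_flatMap_iff_foxJacobian h e.1 e.2

theorem solves_of_eqMinor_eq_zero (hrank : n ≤ mRank h + 1) (hne : e₁.1 ≠ e₁.2)
    (hminor : ∀ k l, eqMinor (List.length ∘ h) e₁ e₂ k l = 0)
    (he₁ : mApply h e₁.1 = mApply h e₁.2) : mApply h e₂.1 = mApply h e₂.2 := by
  obtain ⟨k, hk⟩ := exists_eqPoly_ne_zero hrank hne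
  rw [mApply_eq_iff_foxJacobian] at he₁ ⊢
  have proportional :
      eqPoly e₁.1 e₁.2 k (List.length ∘ h) • (fun x => eqPoly e₂.1 e₂.2 x (List.length ∘ h)) =
      eqPoly e₂.1 e₂.2 k (List.length ∘ h) • (fun x => eqPoly e₁.1 e₁.2 x (List.length ∘ h)) := by
    funext l
    simp only [Pi.smul_apply, smul_eq_mul]
    exact (sub_eq_zero.mp (hminor k l)).trans (mul_comm _ _)
  refine (smul_eq_zero.mp ?_).resolve_left hk
  rw [← map_smul, proportional, map_smul, he₁, smul_zero]

theorem exists_eqMinor_ne_zero (hne₁ : e₁.1 ≠ e₁.2) (hne₂ : e₂.1 ≠ e₂.2)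
    (hdiff : {h : Fin n → List ℕ | mApply h e₁.1 = mApply h e₁.2 ∧ mRank h = n - 1} ≠
      {h : Fin n → List ℕ | mApply h e₂.1 = mApply h e₂.2 ∧ mRank h = n - 1}) :
    ∃ L k l, eqMinor L e₁ e₂ k l ≠ 0 := by
  by_contra! hzero
  refine hdiff (Set.ext fun h => and_congr_left fun hrank => ⟨?_, ?_⟩)
  · exact solves_of_eqMinor_eq_zero (by lia) hne₁ fun k l => hzero _ k l
  · exact solves_of_eqMinor_eq_zero (by lia) hne₂ fun k l => by
      rw [eqMinor_swap, hzero, neg_zero]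

end Minors

/-! ### Cancelling sums of monomials -/

theorem exists_eq_minimal_of_map_eq_map {α γ : Type*} [DecidableEq α] [LinearOrder γ]
    {s t : Multiset α} {f : α → γ} (hne : s ≠ t) (hmap : s.map f = t.map f) :
    ∃ a ∈ s - t, ∃ b ∈ t - s, f a = f b ∧ (∀ c ∈ s - t, f a ≤ f c) ∧ ∀ c ∈ t - s, f b ≤ f c := by
  have map_sub_eq : (s - t).map f = (t - s).map f := by
    refine add_right_cancel (b := (s ∩ t).map f) ?_
    rw [← Multiset.map_add, Multiset.sub_add_inter, Multiset.inter_comm, ← Multiset.map_add,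
      Multiset.sub_add_inter, hmap]
  have sub_ne_zero : s - t ≠ 0 := fun h => hne <|
    Multiset.eq_of_le_of_card_le (tsub_eq_zero_iff_le.mp h)
      (by simpa using (congrArg Multiset.card hmap).ge)
  obtain ⟨a, ha, a_min⟩ := (s - t).toFinset.exists_min_image f
    (Multiset.toFinset_nonempty.mpr sub_ne_zero)
  simp only [Multiset.mem_toFinset] at ha a_min
  obtain ⟨b, hb, hab⟩ := Multiset.mem_map.mp (map_sub_eq ▸ Multiset.mem_map_of_mem f ha)
  refine ⟨a, ha, b, hb, hab.symm, a_min, fun c hc => ?_⟩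
  obtain ⟨c', hc', hcc'⟩ := Multiset.mem_map.mp (map_sub_eq.symm ▸ Multiset.mem_map_of_mem f hc)
  rw [hab, ← hcc']
  exact a_min c' hc'

theorem exists_finset_le_of_chains {α : Type*} [Preorder α] {P : List (List α)}
    (hP : ∀ c ∈ P, c.Pairwise (· ≤ ·)) (p : α → Prop) :
    ∃ T : Finset α, T.card ≤ P.length ∧ (∀ t ∈ T, p t) ∧
      ∀ m ∈ P.flatten, p m → ∃ t ∈ T, t ≤ m := by
  classical
  refine ⟨(P.filterMap (List.find? (p ·))).toFinset,
    (List.toFinset_card_le _).trans (List.length_filterMap_le _ _), fun t ht => ?_,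
    fun m hm hpm => ?_⟩
  · obtain ⟨c, -, hc⟩ := List.mem_filterMap.mp (List.mem_toFinset.mp ht)
    simpa using List.find?_some hc
  · obtain ⟨c, hcP, hmc⟩ := List.mem_flatten.mp hm
    obtain ⟨t, ht⟩ : ∃ t, c.find? (p ·) = some t :=
      Option.isSome_iff_exists.mp (List.find?_isSome.mpr ⟨m, hmc, by simpa using hpm⟩)
    refine ⟨t, List.mem_toFinset.mpr (List.mem_filterMap.mpr ⟨c, hcP, ht⟩), ?_⟩
    obtain ⟨-, before, after, rfl, not_before⟩ := List.find?_eq_some_iff_append.mp ht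
    have after_ge := (List.pairwise_cons.mp (List.pairwise_append.mp (hP _ hcP)).2.1).1
    rcases List.mem_append.mp hmc with hm | hm
    · simpa [hpm] using not_before m hm
    · rcases List.mem_cons.mp hm with rfl | hm
      · exact le_rfl
      · exact after_ge m hm

section Covering

variable {ι : Type*} [Fintype ι]

/-- The generating polynomial of a multiset of exponent vectors under the grading `L`. -/
noncomputable def weightPoly (L : ι → ℕ) (s : Multiset (ι → ℕ)) : ℤ[X] :=
  (s.map fun m => X ^ (L ⬝ᵥ m)).sum

theorem weightPoly_add (L : ι → ℕ) (s t : Multiset (ι → ℕ)) :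
    weightPoly L (s + t) = weightPoly L s + weightPoly L t := by
  simp [weightPoly]

theorem weightPoly_map_add_left (L a : ι → ℕ) (s : Multiset (ι → ℕ)) :
    weightPoly L (s.map (a + ·)) = X ^ (L ⬝ᵥ a) * weightPoly L s := by
  simp [weightPoly, dotProduct_add, pow_add, Multiset.sum_map_mul_left]

theorem coeff_weightPoly (L : ι → ℕ) (s : Multiset (ι → ℕ)) (d : ℕ) :
    (weightPoly L s).coeff d = (s.map (L ⬝ᵥ ·)).count d := by
  induction s using Multiset.induction_on with
  | empty => simp [weightPoly]
  | cons a s ih =>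
    rw [← Multiset.singleton_add, weightPoly_add, coeff_add, ih, Multiset.map_add,
      Multiset.count_add, Nat.cast_add]
    simp [weightPoly, coeff_X_pow, Multiset.count_singleton]

theorem map_dotProduct_eq_of_weightPoly_eq {L : ι → ℕ} {s t : Multiset (ι → ℕ)}
    (h : weightPoly L s = weightPoly L t) : s.map (L ⬝ᵥ ·) = t.map (L ⬝ᵥ ·) := by
  ext d
  exact_mod_cast (coeff_weightPoly L s d).symm.trans (h ▸ coeff_weightPoly L t d)

/-- The space of gradings under which the exponent vectors `a` and `b` have the same weight. -/
noncomputable def agreementSpace (a b : ι → ℕ) : Submodule ℚ (ι → ℚ) :=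
  LinearMap.ker (Fintype.linearCombination ℚ fun i => (a i - b i : ℚ))

theorem natCast_mem_agreementSpace {a b L : ι → ℕ} (h : L ⬝ᵥ a = L ⬝ᵥ b) :
    (fun i => (L i : ℚ)) ∈ agreementSpace a b := by
  have h_cast : ∑ i, (L i * a i : ℚ) = ∑ i, (L i * b i : ℚ) := mod_cast h
  simpa [agreementSpace, Fintype.linearCombination_apply, mul_sub, sub_eq_zero] using h_cast

theorem finrank_agreementSpace_le {a b : ι → ℕ} (hab : a ≠ b) :
    Module.finrank ℚ (agreementSpace a b) ≤ Fintype.card ι - 1 := by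
  classical
  obtain ⟨i, hi⟩ := Function.ne_iff.mp hab
  refine Nat.le_sub_one_of_lt (Module.finrank_fintype_fun_eq_card (η := ι) ℚ ▸
    Submodule.finrank_lt (ne_of_mem_of_not_mem' (a := Pi.single i 1) trivial ?_).symm)
  simpa [agreementSpace, Fintype.linearCombination_apply_single, sub_eq_zero] using hi

/-- When the two generating polynomials agree, the least surviving weights on both sides agree, and
these are attained at minimal elements of chains. -/
theorem exists_agreementSpace_cover {P N : List (List (ι → ℕ))}
    (hP : ∀ c ∈ P, c.Pairwise (· ≤ ·)) (hN : ∀ c ∈ N, c.Pairwise (· ≤ ·))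
    (hne : (P.flatten : Multiset (ι → ℕ)) ≠ N.flatten) :
    ∃ S : Finset (Submodule ℚ (ι → ℚ)), S.card ≤ P.length * N.length ∧
      (∀ W ∈ S, Module.finrank ℚ W ≤ Fintype.card ι - 1) ∧
      ∀ L : ι → ℕ, weightPoly L P.flatten = weightPoly L N.flatten →
        ∃ W ∈ S, (fun i => (L i : ℚ)) ∈ W := by
  classical
  let s : Multiset (ι → ℕ) := P.flatten
  let t : Multiset (ι → ℕ) := N.flatten
  obtain ⟨A, A_card, A_mem, A_le⟩ := exists_finset_le_of_chains hP (· ∈ s - t)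
  obtain ⟨B, B_card, B_mem, B_le⟩ := exists_finset_le_of_chains hN (· ∈ t - s)
  refine ⟨Finset.image₂ agreementSpace A B,
    (Finset.card_image₂_le _ _ _).trans (Nat.mul_le_mul A_card B_card), fun W hW => ?_,
    fun L hL => ?_⟩
  · obtain ⟨a, ha, b, hb, rfl⟩ := Finset.mem_image₂.mp hW
    refine finrank_agreementSpace_le fun hab => ?_
    have count_pos := Multiset.count_pos.mpr (A_mem a ha)
    have count_pos' := Multiset.count_pos.mpr (hab ▸ B_mem b hb)
    rw [Multiset.count_sub] at count_pos count_pos'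
    lia
  · obtain ⟨a, ha, b, hb, hab, a_min, b_min⟩ :=
      exists_eq_minimal_of_map_eq_map hne (map_dotProduct_eq_of_weightPoly_eq hL)
    obtain ⟨a₀, ha₀, ha₀_le⟩ := A_le a (Multiset.mem_of_le (Multiset.sub_le_self s t) ha) ha
    obtain ⟨b₀, hb₀, hb₀_le⟩ := B_le b (Multiset.mem_of_le (Multiset.sub_le_self t s) hb) hb
    refine ⟨_, Finset.mem_image₂_of_mem ha₀ hb₀, natCast_mem_agreementSpace ?_⟩
    have weight_a₀ : L ⬝ᵥ a₀ = L ⬝ᵥ a :=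
      (dotProduct_le_dotProduct_of_nonneg_left ha₀_le zero_le).antisymm
        (a_min a₀ (A_mem a₀ ha₀))
    have weight_b₀ : L ⬝ᵥ b₀ = L ⬝ᵥ b :=
      (dotProduct_le_dotProduct_of_nonneg_left hb₀_le zero_le).antisymm
        (b_min b₀ (B_mem b₀ hb₀))
    rw [weight_a₀, weight_b₀, hab]

end Covering

/-! ### Minors as differences of sums over chains -/

section MinorChains

variable {ι : Type*}

theorem pairwise_map_add_left {c : List (ι → ℕ)} (hc : c.Pairwise (· ≤ ·)) (a : ι → ℕ) :
    (c.map (a + ·)).Pairwise (· ≤ ·) :=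
  hc.map _ fun _ _ h => add_le_add_right h a

/-- The translates of the list `c` by the members of `s`. -/
def translates (s c : List (ι → ℕ)) : List (List (ι → ℕ)) :=
  s.map fun a => c.map (a + ·)

theorem weightPoly_translates [Fintype ι] (L : ι → ℕ) (s c : List (ι → ℕ)) :
    weightPoly L (translates s c).flatten = weightPoly L s * weightPoly L c := by
  induction s with
  | nil => simp [translates, weightPoly]
  | cons a s ih =>
    rw [translates, List.map_cons, List.flatten_cons, ← Multiset.coe_add, weightPoly_add,
      ← Multiset.map_coe, weightPoly_map_add_left, ← translates, ih, ← Multiset.cons_coe,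
      ← Multiset.singleton_add, weightPoly_add, add_mul]
    simp [weightPoly]

variable [DecidableEq ι]

/-- The letter counts of the prefixes of a word that are followed by the letter `x`, in order of
increasing length. -/
def prefixCounts (x : ι) : List ι → List (ι → ℕ)
  | [] => []
  | y :: w => (if y = x then [0] else []) ++ (prefixCounts x w).map (Pi.single y 1 + ·)

theorem length_prefixCounts (x : ι) (w : List ι) : (prefixCounts x w).length = w.count x := by
  induction w with
  | nil => rfl
  | cons y w ih =>
    rw [prefixCounts, List.length_append, List.length_map, ih, List.count_cons]
    split_ifs <;> simp_all [add_comm]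

theorem pairwise_prefixCounts (x : ι) (w : List ι) : (prefixCounts x w).Pairwise (· ≤ ·) := by
  induction w with
  | nil => exact List.Pairwise.nil
  | cons y w ih =>
    rw [prefixCounts]
    split_ifs
    · exact List.pairwise_cons.mpr ⟨fun _ _ => zero_le, pairwise_map_add_left ih _⟩
    · exact pairwise_map_add_left ih _

/-- The lists of exponent vectors contributing positively to the minor of the equations `e₁` and
`e₂` in the columns `k` and `l`; exchanging the sides of `e₂` gives the negative contributions. -/
def minorChains (k l : ι) (e₁ e₂ : List ι × List ι) : List (List (ι → ℕ)) :=
  translates (prefixCounts k e₁.1) (prefixCounts l e₂.1) ++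
    translates (prefixCounts k e₁.2) (prefixCounts l e₂.2) ++
    (translates (prefixCounts l e₁.1) (prefixCounts k e₂.2) ++
      translates (prefixCounts l e₁.2) (prefixCounts k e₂.1))

theorem length_minorChains (k l : ι) (e₁ e₂ : List ι × List ι) :
    (minorChains k l e₁ e₂).length = (e₁.1 ++ e₁.2).count k + (e₁.1 ++ e₁.2).count l := by
  simp [minorChains, translates, length_prefixCounts, add_assoc]

theorem pairwise_of_mem_minorChains {k l : ι} {e₁ e₂ : List ι × List ι} {c : List (ι → ℕ)}
    (hc : c ∈ minorChains k l e₁ e₂) : c.Pairwise (· ≤ ·) := by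
  simp only [minorChains, translates, List.mem_append, List.mem_map] at hc
  rcases hc with (⟨a, -, rfl⟩ | ⟨a, -, rfl⟩) | ⟨a, -, rfl⟩ | ⟨a, -, rfl⟩ <;>
    exact pairwise_map_add_left (pairwise_prefixCounts _ _) a

variable [Fintype ι]

theorem weightPoly_prefixCounts (L : ι → ℕ) (x : ι) (w : List ι) :
    weightPoly L (prefixCounts x w) = foxDeriv L w x := by
  induction w with
  | nil => rfl
  | cons y w ih =>
    rw [prefixCounts, ← Multiset.coe_add, weightPoly_add, ← Multiset.map_coe,
      weightPoly_map_add_left, ih, dotProduct_single_one, foxDeriv, Pi.add_apply, Pi.smul_apply,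
      smul_eq_mul, Pi.single_apply]
    rcases eq_or_ne y x with rfl | hyx
    · simp [weightPoly]
    · simp [weightPoly, hyx, hyx.symm]

theorem weightPoly_minorChains (L : ι → ℕ) (k l : ι) (e₁ e₂ : List ι × List ι) :
    weightPoly L (minorChains k l e₁ e₂).flatten =
      foxDeriv L e₁.1 k * foxDeriv L e₂.1 l + foxDeriv L e₁.2 k * foxDeriv L e₂.2 l +
      (foxDeriv L e₁.1 l * foxDeriv L e₂.2 k + foxDeriv L e₁.2 l * foxDeriv L e₂.1 k) := by
  simp only [minorChains, List.flatten_append, ← Multiset.coe_add, weightPoly_add,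
    weightPoly_translates, weightPoly_prefixCounts]

end MinorChains

theorem eqMinor_eq_weightPoly_sub {n : ℕ} (L : Fin n → ℕ) (e₁ e₂ : List (Fin n) × List (Fin n))
    (k l : Fin n) :
    eqMinor L e₁ e₂ k l = weightPoly L (minorChains k l e₁ e₂).flatten -
      weightPoly L (minorChains k l e₁ e₂.swap).flatten := by
  simp only [eqMinor, eqPoly_eq_foxDeriv_sub, weightPoly_minorChains, Prod.fst_swap, Prod.snd_swap]
  ring

theorem cover_theorem_general {n : ℕ} (e₁ e₂ : List (Fin n) × List (Fin n))
    (h₁ : e₁.1 ≠ e₁.2) (h₂ : e₂.1 ≠ e₂.2)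
    (hdiff : {h : Fin n → List ℕ | mApply h e₁.1 = mApply h e₁.2 ∧ mRank h = n - 1} ≠
      {h : Fin n → List ℕ | mApply h e₂.1 = mApply h e₂.2 ∧ mRank h = n - 1}) :
    ∃ (k l : Fin n) (S : Finset (Submodule ℚ (Fin n → ℚ))),
      S.card ≤ ((e₁.1 ++ e₁.2).count k + (e₁.1 ++ e₁.2).count l) ^ 2 ∧
      (∀ W ∈ S, Module.finrank ℚ W ≤ n - 1) ∧
      ∀ h : Fin n → List ℕ, mApply h e₁.1 = mApply h e₁.2 → mApply h e₂.1 = mApply h e₂.2 →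
        mRank h = n - 1 → ∃ W ∈ S, lenQ h ∈ W := by
  obtain ⟨L, k, l, minor_ne_zero⟩ := exists_eqMinor_ne_zero h₁ h₂ hdiff
  have chains_ne : ((minorChains k l e₁ e₂).flatten : Multiset (Fin n → ℕ)) ≠
      (minorChains k l e₁ e₂.swap).flatten := fun h_eq =>
    minor_ne_zero (by rw [eqMinor_eq_weightPoly_sub, h_eq, sub_self])
  obtain ⟨S, S_card, S_finrank, S_cover⟩ := exists_agreementSpace_cover
    (fun _ => pairwise_of_mem_minorChains) (fun _ => pairwise_of_mem_minorChains) chains_ne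
  refine ⟨k, l, S, ?_, by simpa using S_finrank, fun h he₁ he₂ hrank => S_cover _ ?_⟩
  · simpa only [length_minorChains, sq] using S_card
  · rw [← sub_eq_zero, ← eqMinor_eq_weightPoly_sub]
    exact eqMinor_eq_zero_of_solves (by lia) he₁ he₂ k l

/-- If `E₁, E₂` are nontrivial equations on `n` unknowns whose sets of solutions of rank
`n − 1` differ, then for some unknowns `x_k, x_l` the length types of all common solutions
of rank `n − 1` are covered by at most `(|E₁|_{x_k} + |E₁|_{x_l})²` subspaces of `ℚⁿ` of
dimension at most `n − 1`. -/
theorem cover_theorem {n : ℕ}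
    (A : Finset ℕ) (hA : ∀ a ∈ A, 0 < a)
    (e₁ e₂ : List (Fin n) × List (Fin n))
    (h₁ : e₁.1 ≠ e₁.2) (h₂ : e₂.1 ≠ e₂.2)
    (hdiff :
      {h : Fin n → List ℕ | IntoAlph A h ∧ mApply h e₁.1 = mApply h e₁.2 ∧ mRank h = n - 1}
        ≠ {h : Fin n → List ℕ | IntoAlph A h ∧ mApply h e₂.1 = mApply h e₂.2 ∧
            mRank h = n - 1}) :
    ∃ (k l : Fin n) (S : Finset (Submodule ℚ (Fin n → ℚ))),
      S.card ≤ ((e₁.1 ++ e₁.2).count k + (e₁.1 ++ e₁.2).count l) ^ 2 ∧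
      (∀ W ∈ S, Module.finrank ℚ W ≤ n - 1) ∧
      ∀ h : Fin n → List ℕ, IntoAlph A h →
        mApply h e₁.1 = mApply h e₁.2 → mApply h e₂.1 = mApply h e₂.2 →
        mRank h = n - 1 → ∃ W ∈ S, lenQ h ∈ W := by
  obtain ⟨k, l, S, S_card, S_finrank, S_cover⟩ := cover_theorem_general e₁ e₂ h₁ h₂ fun h_eq =>
    hdiff (Set.ext fun h => and_congr_right fun _ => Set.ext_iff.mp h_eq h)
  exact ⟨k, l, S, S_card, S_finrank, fun h _ => S_cover h⟩
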